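/- arXiv:2605.21358 — 2 statements merged into one kernel-verified Lean document; each statement's English description precedes it below -/
import Mathlib

section
/- Let β ∈ (0,1), let φ : ZMod 12 → ℝ satisfy 0 < φ_m < 1 for all m, let X : ZMod 12 → ℝ, and define Φ = ∏_{j=1}^{12} φ_j, A_m = (Σ_{s=0}^{11} β^s ∏_{j=1}^{s} φ_{m+j}) / (1 − β^{12} Φ), and D_m = Σ_{r=1}^{12} w_{m,r} X_{m+r} with w_{m,r} = β^r (∏_{j=1}^{r−1} φ_{m+j}) (1 − φ_{m+r}) / (1 − β^{12} Φ). Then for every ε ∈ ℝ, the unique function h : ZMod 12 → ℝ satisfying the Bellman system h_m = ε + β (φ_{m+1} h_{m+1} + (1 − φ_{m+1}) X_{m+1}) for all m is given by h_m = A_m ε + D_m; in particular, the 12-periodic solution of the homeowner Bellman equation is affine in the match quality ε with slope A_m and intercept D_m. -/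
open Finset

/-- `Φ = ∏_{j=1}^{12} φ_j`. -/
noncomputable def Phi (φ : ZMod 12 → ℝ) : ℝ := ∏ j : ZMod 12, φ j

/-- The slope `A_m = (Σ_{s=0}^{11} β^s ∏_{j=1}^{s} φ_{m+j}) / (1 − β^{12} Φ)`. -/
noncomputable def Aslope (β : ℝ) (φ : ZMod 12 → ℝ) (m : ZMod 12) : ℝ :=
  (∑ s ∈ Finset.range 12, β ^ s * ∏ j ∈ Finset.range s, φ (m + ((j : ZMod 12) + 1))) /
    (1 - β ^ 12 * Phi φ)

/-- The weights `w_{m,r} = β^r (∏_{j=1}^{r−1} φ_{m+j}) (1 − φ_{m+r}) / (1 − β^{12} Φ)`. -/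
noncomputable def wgt (β : ℝ) (φ : ZMod 12 → ℝ) (m : ZMod 12) (r : ℕ) : ℝ :=
  β ^ r * (∏ j ∈ Finset.range (r - 1), φ (m + ((j : ZMod 12) + 1))) *
    (1 - φ (m + (r : ZMod 12))) / (1 - β ^ 12 * Phi φ)

/-- The intercept `D_m = Σ_{r=1}^{12} w_{m,r} X_{m+r}`. -/
noncomputable def Dint (β : ℝ) (φ : ZMod 12 → ℝ) (X : ZMod 12 → ℝ) (m : ZMod 12) : ℝ :=
  ∑ r ∈ Finset.Icc 1 12, wgt β φ m r * X (m + (r : ZMod 12))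

/-! The Bellman system is a linear recurrence `h m = g m + a m * h (m + 1)` on a cycle, with
effective discount factors `a m = β φ_{m+1}` and payoffs `g m = ε + β (1 - φ_{m+1}) X_{m+1}`.
Unrolling it once around the cycle gives `(1 - ∏ a) h m = V m`, where `V m` is the present value of
one year of payoffs, so there is at most one solution. Conversely, splitting off the first or the
last of thirteen months of payoffs gives `g m + a m * V (m + 1) = V m + (∏ a) * g m`, so
`V / (1 - ∏ a)` is a solution. It is affine in `ε` because present values are linear in the
payoffs. -/

section PresentValue

variable {ι : Type*} [AddMonoidWithOne ι]

lemma add_one_add_natCast (m : ι) (k : ℕ) : m + 1 + k = m + (k + 1 : ℕ) := by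
  rw [add_comm k, Nat.cast_add, Nat.cast_one, add_assoc]

/-- The discount factor accumulated over the `k` periods starting at `m`, where `a i` discounts
period `i + 1` to period `i`. -/
def cumulativeDiscount {M : Type*} [CommMonoid M] (a : ι → M) (m : ι) (k : ℕ) : M :=
  ∏ j ∈ range k, a (m + j)

lemma cumulativeDiscount_succ {M : Type*} [CommMonoid M] (a : ι → M) (m : ι) (k : ℕ) :
    cumulativeDiscount a m (k + 1) = a m * cumulativeDiscount a (m + 1) k := by
  simp only [cumulativeDiscount, prod_range_succ', add_one_add_natCast, Nat.cast_zero, add_zero,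
    mul_comm (a m)]

variable {R : Type*} [CommSemiring R]

/-- The value at the start of period `m` of the payoffs `g` of the `k` periods starting at `m`. -/
def presentValue (a g : ι → R) (m : ι) (k : ℕ) : R :=
  ∑ s ∈ range k, cumulativeDiscount a m s * g (m + s)

lemma presentValue_succ (a g : ι → R) (m : ι) (k : ℕ) :
    presentValue a g m (k + 1) = g m + a m * presentValue a g (m + 1) k := by
  have hfirst : cumulativeDiscount a m 0 * g (m + (0 : ℕ)) = g m := by
    simp [cumulativeDiscount]
  simp only [presentValue, sum_range_succ', hfirst, cumulativeDiscount_succ, mul_sum, mul_assoc,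
    add_one_add_natCast, add_comm (g m)]

lemma presentValue_add (a f g : ι → R) (m : ι) (k : ℕ) :
    presentValue a (fun i => f i + g i) m k = presentValue a f m k + presentValue a g m k := by
  simp only [presentValue, mul_add, sum_add_distrib]

lemma presentValue_const (a : ι → R) (c : R) (m : ι) (k : ℕ) :
    presentValue a (fun _ => c) m k = (∑ s ∈ range k, cumulativeDiscount a m s) * c := by
  rw [presentValue, sum_mul]

lemma eq_presentValue_add_of_recurrence {a g h : ι → R}
    (hh : ∀ m, h m = g m + a m * h (m + 1)) (m : ι) (k : ℕ) :
    h m = presentValue a g m k + cumulativeDiscount a m k * h (m + k) := by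
  induction k generalizing m with
  | zero => simp [presentValue, cumulativeDiscount]
  | succ k ih =>
    calc h m = g m + a m * h (m + 1) := hh m
      _ = g m + a m * (presentValue a g (m + 1) k +
            cumulativeDiscount a (m + 1) k * h (m + 1 + k)) := by rw [← ih (m + 1)]
      _ = presentValue a g m (k + 1) +
            cumulativeDiscount a m (k + 1) * h (m + (k + 1 : ℕ)) := by
        rw [presentValue_succ, cumulativeDiscount_succ, add_one_add_natCast]
        ring

end PresentValue

section Cycle

variable {n : ℕ} [NeZero n]

lemma prod_range_natCast_zmod {M : Type*} [CommMonoid M] (f : ZMod n → M) :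
    ∏ j ∈ range n, f j = ∏ x, f x :=
  prod_nbij' (fun j : ℕ => (j : ZMod n)) ZMod.val (fun _ _ => mem_univ _)
    (fun x _ => mem_range.mpr x.val_lt) (fun _ hj => ZMod.val_cast_of_lt (mem_range.mp hj))
    (fun x _ => ZMod.natCast_zmod_val x) fun _ _ => rfl

lemma cumulativeDiscount_cycle {M : Type*} [CommMonoid M] (a : ZMod n → M) (m : ZMod n) :
    cumulativeDiscount a m n = ∏ x, a x :=
  (prod_range_natCast_zmod fun x => a (m + x)).trans (Equiv.prod_comp (Equiv.addLeft m) a)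

lemma presentValue_cycle_recurrence {R : Type*} [CommSemiring R] (a g : ZMod n → R)
    (m : ZMod n) :
    g m + a m * presentValue a g (m + 1) n = presentValue a g m n + (∏ x, a x) * g m := by
  rw [← presentValue_succ, presentValue, sum_range_succ, cumulativeDiscount_cycle,
    ZMod.natCast_self, add_zero, ← presentValue]

theorem cyclic_recurrence_iff {K : Type*} [Field K] {a g h : ZMod n → K}
    (ha : ∏ x, a x ≠ 1) :
    (∀ m, h m = g m + a m * h (m + 1)) ↔
      h = fun m => presentValue a g m n / (1 - ∏ x, a x) := by
  have hne : 1 - ∏ x, a x ≠ 0 := sub_ne_zero.mpr ha.symm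
  constructor
  · refine fun hh => funext fun m => (eq_div_iff hne).mpr ?_
    have hcycle := eq_presentValue_add_of_recurrence hh m n
    rw [cumulativeDiscount_cycle, ZMod.natCast_self, add_zero] at hcycle
    linear_combination hcycle
  · rintro rfl m
    field_simp
    linear_combination -presentValue_cycle_recurrence a g m

end Cycle

section Homeowner

variable (β : ℝ) (φ : ZMod 12 → ℝ)

/-- The effective discount factor `β φ_{m+1}` of a homeowner from month `m + 1` to month `m`. -/
def matchDiscount (m : ZMod 12) : ℝ := β * φ (m + 1)

/-- The discounted expected value `β (1 - φ_{m+1}) X_{m+1}` of losing the match and entering month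
`m + 1` as a mover. -/
def movingPayoff (X : ZMod 12 → ℝ) (m : ZMod 12) : ℝ := β * (1 - φ (m + 1)) * X (m + 1)

lemma prod_matchDiscount : ∏ m, matchDiscount β φ m = β ^ 12 * Phi φ := by
  simp only [matchDiscount, prod_mul_distrib, prod_const, card_univ, ZMod.card, Phi]
  exact congrArg (β ^ 12 * ·) (Equiv.prod_comp (Equiv.addRight 1) φ)

lemma cumulativeDiscount_matchDiscount (m : ZMod 12) (s : ℕ) :
    cumulativeDiscount (matchDiscount β φ) m s =
      β ^ s * ∏ j ∈ range s, φ (m + ((j : ZMod 12) + 1)) := by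
  simp only [cumulativeDiscount, matchDiscount, prod_mul_distrib, prod_const, card_range, add_assoc]

lemma Aslope_eq_sum_cumulativeDiscount (m : ZMod 12) :
    Aslope β φ m =
      (∑ s ∈ range 12, cumulativeDiscount (matchDiscount β φ) m s) / (1 - β ^ 12 * Phi φ) := by
  simp only [Aslope, cumulativeDiscount_matchDiscount]

lemma wgt_succ_mul (X : ZMod 12 → ℝ) (m : ZMod 12) (s : ℕ) :
    wgt β φ m (s + 1) * X (m + (s + 1 : ℕ)) =
      cumulativeDiscount (matchDiscount β φ) m s * movingPayoff β φ X (m + s) /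
        (1 - β ^ 12 * Phi φ) := by
  rw [wgt, cumulativeDiscount_matchDiscount, movingPayoff, Nat.add_sub_cancel, Nat.cast_add_one,
    ← add_assoc m]
  ring

lemma Dint_eq_presentValue (X : ZMod 12 → ℝ) (m : ZMod 12) :
    Dint β φ X m =
      presentValue (matchDiscount β φ) (movingPayoff β φ X) m 12 / (1 - β ^ 12 * Phi φ) := by
  calc Dint β φ X m
      = ∑ s ∈ range 12, wgt β φ m (s + 1) * X (m + (s + 1 : ℕ)) := by
        rw [range_eq_Ico, sum_Ico_add' fun r : ℕ => wgt β φ m r * X (m + r)]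
        rfl
    _ = _ := by simp only [wgt_succ_mul, presentValue, sum_div]

lemma Aslope_mul_add_Dint (X : ZMod 12 → ℝ) (ε : ℝ) (m : ZMod 12) :
    Aslope β φ m * ε + Dint β φ X m =
      presentValue (matchDiscount β φ) (fun i => ε + movingPayoff β φ X i) m 12 /
        (1 - β ^ 12 * Phi φ) := by
  rw [presentValue_add, presentValue_const, Aslope_eq_sum_cumulativeDiscount,
    Dint_eq_presentValue]
  ring

variable {β φ}

lemma pow_mul_Phi_lt_one (hβ₀ : 0 ≤ β) (hβ₁ : β < 1) (hφ₀ : ∀ m, 0 ≤ φ m) (hφ₁ : ∀ m, φ m ≤ 1) :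
    β ^ 12 * Phi φ < 1 := by
  have hPhi : Phi φ ≤ 1 := prod_le_one (fun m _ => hφ₀ m) fun m _ => hφ₁ m
  calc β ^ 12 * Phi φ ≤ β ^ 12 := mul_le_of_le_one_right (pow_nonneg hβ₀ 12) hPhi
    _ < 1 := pow_lt_one₀ hβ₀ hβ₁ (by norm_num)

end Homeowner

theorem stmt3_general {β : ℝ} {φ : ZMod 12 → ℝ} (hne : β ^ 12 * Phi φ ≠ 1)
    (X : ZMod 12 → ℝ) (ε : ℝ) (h : ZMod 12 → ℝ) :
    (∀ m, h m = ε + β * (φ (m + 1) * h (m + 1) + (1 - φ (m + 1)) * X (m + 1))) ↔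
      h = fun m => Aslope β φ m * ε + Dint β φ X m := by
  have hbellman (m : ZMod 12) :
      ε + β * (φ (m + 1) * h (m + 1) + (1 - φ (m + 1)) * X (m + 1)) =
        ε + movingPayoff β φ X m + matchDiscount β φ m * h (m + 1) := by
    rw [movingPayoff, matchDiscount]
    ring
  simp only [hbellman, Aslope_mul_add_Dint, ← prod_matchDiscount]
  exact cyclic_recurrence_iff (prod_matchDiscount β φ ▸ hne)

theorem stmt3 (β : ℝ) (hβ : 0 < β ∧ β < 1) (φ : ZMod 12 → ℝ)
    (hφ : ∀ m, 0 < φ m ∧ φ m < 1) (X : ZMod 12 → ℝ) (ε : ℝ) :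
    (∀ m, Aslope β φ m * ε + Dint β φ X m =
        ε + β * (φ (m + 1) * (Aslope β φ (m + 1) * ε + Dint β φ X (m + 1)) +
          (1 - φ (m + 1)) * X (m + 1))) ∧
    ∀ h : ZMod 12 → ℝ,
      (∀ m, h m = ε + β * (φ (m + 1) * h (m + 1) + (1 - φ (m + 1)) * X (m + 1))) →
      h = fun m => Aslope β φ m * ε + Dint β φ X m := by
  have hne := (pow_mul_Phi_lt_one hβ.1.le hβ.2 (fun m => (hφ m).1.le) fun m => (hφ m).2.le).ne
  exact ⟨(stmt3_general hne X ε _).mpr rfl, fun h => (stmt3_general hne X ε h).mp⟩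
end

section
/- Let β ∈ (0,1), u > 0, and let φ : ZMod 12 → ℝ satisfy 0 < φ_m < 1 for all m. Define Φ = ∏_{j=1}^{12} φ_j, A_m = (Σ_{s=0}^{11} β^s ∏_{j=1}^{s} φ_{m+j}) / (1 − β^{12} Φ), w_{m,r} = β^r (∏_{j=1}^{r−1} φ_{m+j}) (1 − φ_{m+r}) / (1 − β^{12} Φ), φ_max = max_m φ_m, φ_min = min_m φ_m, A_max = max_m A_m, v̲ = 1 − φ_max, v̄ = (1 − φ_min)/(1 − φ_max), X̲ = u/(1 − β), X̄ = u/(1 − β) + A_max v̄/(2(1 − β)), and the box K = [X̲, X̄]^{12} × [v̲, v̄]^{12}. Define T : K → (ZMod 12 → ℝ) × (ZMod 12 → ℝ) by: given (X, v) ∈ K, set D_m = Σ_{r=1}^{12} w_{m,r} X_{m+r}, ε_m = (β X_{m+1} + u − D_m)/A_m, ε̄_m = min(max(ε_m, 0), v_m), ṽ_m = 1 − φ_m + φ_m ε̄_{m−1}, X̃_m = β X_{m+1} + u + (A_m/2)(v_m − ε̄_m)²/v_m, and T(X, v) = (X̃, ṽ). Then T maps K into itself: for every (X, v) ∈ K,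 (X̃, ṽ) ∈ K. -/
open Finset

/-- The provisional reservation cutoff `ε_m = (β X_{m+1} + u − D_m)/A_m`. -/
noncomputable def epsProv (β u : ℝ) (φ X : ZMod 12 → ℝ) (m : ZMod 12) : ℝ :=
  (β * X (m + 1) + u - Dint β φ X m) / Aslope β φ m

/-- The clamped reservation cutoff `ε̄_m = min(max(ε_m, 0), v_m)`. -/
noncomputable def epsBar (β u : ℝ) (φ X v : ZMod 12 → ℝ) (m : ZMod 12) : ℝ :=
  min (max (epsProv β u φ X m) 0) (v m)

/-- The updated vacancy stock `ṽ_m = 1 − φ_m + φ_m ε̄_{m−1}`. -/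
noncomputable def vTilde (β u : ℝ) (φ X v : ZMod 12 → ℝ) (m : ZMod 12) : ℝ :=
  1 - φ m + φ m * epsBar β u φ X v (m - 1)

/-- The updated mover value `X̃_m = β X_{m+1} + u + (A_m/2)(v_m − ε̄_m)²/v_m`. -/
noncomputable def XTilde (β u : ℝ) (φ X v : ZMod 12 → ℝ) (m : ZMod 12) : ℝ :=
  β * X (m + 1) + u + Aslope β φ m / 2 * (v m - epsBar β u φ X v m) ^ 2 / v m

/-!
Since `0 ≤ ε̄_m ≤ v_m` and `0 ≤ A_m ≤ A_max`, the gain `u + (A_m/2)(v_m − ε̄_m)²/v_m` lies between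
`u` and `u + A_max v̄/2`. The endpoints of the value interval are the fixed points `c / (1 − β)` of
the increasing maps `x ↦ β x + c` for these two values of `c`. The updated vacancy stock
`1 − φ_m + φ_m ε̄_{m−1}` is a convex combination of `1` and `ε̄_{m−1}`, both of
which are at most `v̄`.
-/

lemma mul_div_one_sub_add {𝕜 : Type*} [Field 𝕜] {β : 𝕜} (hβ : β ≠ 1) (c : 𝕜) :
    β * (c / (1 - β)) + c = c / (1 - β) := by
  have hne : 1 - β ≠ 0 := sub_ne_zero.2 hβ.symm
  field_simp
  ring

section OrderedField

variable {𝕜 : Type*} [Field 𝕜] [LinearOrder 𝕜] [IsStrictOrderedRing 𝕜]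

lemma div_one_sub_le_mul_add {β c g x : 𝕜} (hβ₀ : 0 ≤ β) (hβ₁ : β < 1)
    (hx : c / (1 - β) ≤ x) (hg : c ≤ g) : c / (1 - β) ≤ β * x + g :=
  calc c / (1 - β) = β * (c / (1 - β)) + c := (mul_div_one_sub_add hβ₁.ne c).symm
    _ ≤ β * x + g := by gcongr

lemma mul_add_le_div_one_sub {β c g x : 𝕜} (hβ₀ : 0 ≤ β) (hβ₁ : β < 1)
    (hx : x ≤ c / (1 - β)) (hg : g ≤ c) : β * x + g ≤ c / (1 - β) :=
  calc β * x + g ≤ β * (c / (1 - β)) + c := by gcongr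
    _ = c / (1 - β) := mul_div_one_sub_add hβ₁.ne c

lemma sub_sq_div_le_self {v ε : 𝕜} (hv : 0 < v) (hε : ε ∈ Set.Icc 0 v) : (v - ε) ^ 2 / v ≤ v := by
  refine (div_le_iff₀ hv).2 ?_
  calc (v - ε) ^ 2 ≤ v ^ 2 := pow_le_pow_left₀ (sub_nonneg.2 hε.2) (sub_le_self v hε.1) 2
    _ = v * v := sq v

lemma div_two_mul_sub_sq_div_mem_Icc {a amax v vmax ε : 𝕜} (ha : a ∈ Set.Icc 0 amax)
    (hv : v ∈ Set.Ioc 0 vmax) (hε : ε ∈ Set.Icc 0 v) :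
    a / 2 * (v - ε) ^ 2 / v ∈ Set.Icc 0 (amax * vmax / 2) := by
  obtain ⟨ha₀, ha₁⟩ := ha
  obtain ⟨hv₀, hv₁⟩ := hv
  have hamax : 0 ≤ amax := ha₀.trans ha₁
  refine ⟨by positivity, ?_⟩
  calc a / 2 * (v - ε) ^ 2 / v = a / 2 * ((v - ε) ^ 2 / v) := mul_div_assoc ..
    _ ≤ amax / 2 * vmax := by
      gcongr
      exact (sub_sq_div_le_self hv₀ hε).trans hv₁
    _ = amax * vmax / 2 := by ring

lemma moverValue_update_mem_Icc {β u x a amax v vmax ε : 𝕜} (hβ₀ : 0 ≤ β) (hβ₁ : β < 1)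
    (hx : x ∈ Set.Icc (u / (1 - β)) (u / (1 - β) + amax * vmax / (2 * (1 - β))))
    (ha : a ∈ Set.Icc 0 amax) (hv : v ∈ Set.Ioc 0 vmax) (hε : ε ∈ Set.Icc 0 v) :
    β * x + u + a / 2 * (v - ε) ^ 2 / v ∈
      Set.Icc (u / (1 - β)) (u / (1 - β) + amax * vmax / (2 * (1 - β))) := by
  have hupper : u / (1 - β) + amax * vmax / (2 * (1 - β)) = (u + amax * vmax / 2) / (1 - β) := by
    rw [add_div, div_div]
  obtain ⟨hgain₀, hgain₁⟩ := div_two_mul_sub_sq_div_mem_Icc ha hv hε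
  rw [hupper] at hx ⊢
  rw [add_assoc]
  exact ⟨div_one_sub_le_mul_add hβ₀ hβ₁ hx.1 (le_add_of_nonneg_right hgain₀),
    mul_add_le_div_one_sub hβ₀ hβ₁ hx.2 (add_le_add_right hgain₁ u)⟩

lemma vacancy_update_mem_Icc {p pmin pmax ε : 𝕜} (hp₀ : 0 ≤ p) (hp : p ∈ Set.Icc pmin pmax)
    (hpmax : pmax < 1) (hε : ε ∈ Set.Icc 0 ((1 - pmin) / (1 - pmax))) :
    1 - p + p * ε ∈ Set.Icc (1 - pmax) ((1 - pmin) / (1 - pmax)) := by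
  have hone : 1 ≤ (1 - pmin) / (1 - pmax) :=
    (one_le_div (sub_pos.2 hpmax)).2 (sub_le_sub_left (hp.1.trans hp.2) 1)
  have hp₁ : 0 ≤ 1 - p := sub_nonneg.2 (hp.2.trans hpmax.le)
  constructor
  · calc 1 - pmax ≤ 1 - p := sub_le_sub_left hp.2 1
      _ ≤ 1 - p + p * ε := le_add_of_nonneg_right (mul_nonneg hp₀ hε.1)
  · calc 1 - p + p * ε
        ≤ (1 - p) * ((1 - pmin) / (1 - pmax)) + p * ((1 - pmin) / (1 - pmax)) :=
          add_le_add (le_mul_of_one_le_right hp₁ hone) (mul_le_mul_of_nonneg_left hε.2 hp₀)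
      _ = (1 - pmin) / (1 - pmax) := by ring

theorem stmt9_general {ι : Type*} (next prev : ι → ι) {β u φmin φmax Amax : 𝕜}
    {φ A X v ε : ι → 𝕜} (hβ₀ : 0 ≤ β) (hβ₁ : β < 1) (hφ₀ : ∀ m, 0 ≤ φ m)
    (hφ : ∀ m, φ m ∈ Set.Icc φmin φmax) (hφmax : φmax < 1) (hA : ∀ m, A m ∈ Set.Icc 0 Amax)
    (hX : ∀ m, X m ∈ Set.Icc (u / (1 - β))
      (u / (1 - β) + Amax * ((1 - φmin) / (1 - φmax)) / (2 * (1 - β))))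
    (hv : ∀ m, v m ∈ Set.Icc (1 - φmax) ((1 - φmin) / (1 - φmax)))
    (hε : ∀ m, ε m ∈ Set.Icc 0 (v m)) :
    (∀ m, β * X (next m) + u + A m / 2 * (v m - ε m) ^ 2 / v m ∈ Set.Icc (u / (1 - β))
      (u / (1 - β) + Amax * ((1 - φmin) / (1 - φmax)) / (2 * (1 - β)))) ∧
    (∀ m, 1 - φ m + φ m * ε (prev m) ∈ Set.Icc (1 - φmax) ((1 - φmin) / (1 - φmax))) :=
  ⟨fun m => moverValue_update_mem_Icc hβ₀ hβ₁ (hX (next m)) (hA m)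
      ⟨(sub_pos.2 hφmax).trans_le (hv m).1, (hv m).2⟩ (hε m),
    fun m => vacancy_update_mem_Icc (hφ₀ m) (hφ m) hφmax
      ⟨(hε (prev m)).1, (hε (prev m)).2.trans (hv (prev m)).2⟩⟩

end OrderedField

section Slope

variable {β : ℝ} {φ : ZMod 12 → ℝ}

lemma one_sub_pow_mul_Phi_pos (hβ₀ : 0 ≤ β) (hβ₁ : β < 1) (hφ : ∀ m, φ m ∈ Set.Icc 0 1) :
    0 < 1 - β ^ 12 * Phi φ := by
  have hPhi : Phi φ ≤ 1 := prod_le_one (fun m _ => (hφ m).1) fun m _ => (hφ m).2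
  refine sub_pos.2 ?_
  calc β ^ 12 * Phi φ ≤ β ^ 12 := mul_le_of_le_one_right (pow_nonneg hβ₀ 12) hPhi
    _ < 1 := pow_lt_one₀ hβ₀ hβ₁ (by norm_num)

lemma Aslope_nonneg (hβ₀ : 0 ≤ β) (hβ₁ : β < 1) (hφ : ∀ m, φ m ∈ Set.Icc 0 1) (m : ZMod 12) :
    0 ≤ Aslope β φ m :=
  div_nonneg
    (sum_nonneg fun s _ => mul_nonneg (pow_nonneg hβ₀ s) (prod_nonneg fun _ _ => (hφ _).1))
    (one_sub_pow_mul_Phi_pos hβ₀ hβ₁ hφ).le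

end Slope

lemma epsBar_mem_Icc (β u : ℝ) (φ X : ZMod 12 → ℝ) {v : ZMod 12 → ℝ} {m : ZMod 12}
    (hv : 0 ≤ v m) : epsBar β u φ X v m ∈ Set.Icc 0 (v m) :=
  ⟨le_min (le_max_right _ _) hv, min_le_right _ _⟩

theorem stmt9 (β u : ℝ) (hβ : 0 < β ∧ β < 1) (hu : 0 < u) (φ : ZMod 12 → ℝ)
    (hφ : ∀ m, 0 < φ m ∧ φ m < 1) :
    let φmax := Finset.univ.sup' Finset.univ_nonempty φ
    let φmin := Finset.univ.inf' Finset.univ_nonempty φ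
    let Amax := Finset.univ.sup' Finset.univ_nonempty (Aslope β φ)
    let vlo := 1 - φmax
    let vhi := (1 - φmin) / (1 - φmax)
    let Xlo := u / (1 - β)
    let Xhi := u / (1 - β) + Amax * vhi / (2 * (1 - β))
    ∀ X v : ZMod 12 → ℝ,
      (∀ m, Xlo ≤ X m ∧ X m ≤ Xhi) → (∀ m, vlo ≤ v m ∧ v m ≤ vhi) →
      (∀ m, Xlo ≤ XTilde β u φ X v m ∧ XTilde β u φ X v m ≤ Xhi) ∧
      (∀ m, vlo ≤ vTilde β u φ X v m ∧ vTilde β u φ X v m ≤ vhi) := by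
  intro φmax φmin Amax vlo vhi Xlo Xhi X v hX hv
  have hφmax : φmax < 1 := (sup'_lt_iff univ_nonempty).2 fun m _ => (hφ m).2
  have hA (m : ZMod 12) : Aslope β φ m ∈ Set.Icc 0 Amax :=
    ⟨Aslope_nonneg hβ.1.le hβ.2 (fun j => ⟨(hφ j).1.le, (hφ j).2.le⟩) m, le_sup' _ (mem_univ m)⟩
  have hv₀ (m : ZMod 12) : 0 ≤ v m := (sub_pos.2 hφmax).le.trans (hv m).1
  exact stmt9_general (· + 1) (· - 1) hβ.1.le hβ.2 (fun m => (hφ m).1.le)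
    (fun m => ⟨inf'_le φ (mem_univ m), le_sup' φ (mem_univ m)⟩) hφmax hA hX hv
    (fun m => epsBar_mem_Icc β u φ X (hv₀ m))
end
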